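/- arXiv:2009.00329 — 2 statements merged into one kernel-verified Lean document; each statement's English description precedes it below -/
import Mathlib

section
/- For every fixed ratio r ∈ (1/2, 1] there exist constants c ∈ (1, 2] and K > 0 such that for all positive integers d, setting t = ⌈r d⌉, one has (d − t) · C(d,t) · (1/2)^{d−1} ≤ K / c^d. Consequently, for independent standard Gaussian gradient vectors g_1, …, g_d in ℝⁿ and the AND-mask m_t with threshold t = ⌈r d⌉, E‖m_t ⊙ ((1/d) Σ_e g_e)‖² ≤ O(n / c^d), whereas E‖(1/d) Σ_e g_e‖² = n/d decays only linearly in d. -/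
open MeasureTheory ProbabilityTheory

noncomputable def maskG (a : ℝ) (x : ℝ) : ℝ := if 0 < x then a else 1

lemma maskG_meas (a : ℝ) : Measurable (maskG a) := by
  unfold maskG
  exact Measurable.ite measurableSet_Ioi measurable_const measurable_const

lemma maskG_one_le {a : ℝ} (ha : 1 ≤ a) (x : ℝ) : 1 ≤ maskG a x := by
  unfold maskG; split_ifs <;> linarith

lemma maskG_le {a : ℝ} (ha : 1 ≤ a) (x : ℝ) : maskG a x ≤ a := by
  unfold maskG; split_ifs <;> linarith

lemma maskG_half {a : ℝ} (ha : 1 ≤ a) (h : ℝ → ℝ) (hm : Measurable h)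
    (h0 : ∀ x, 0 ≤ h x) (he : ∀ x, h (-x) = h x)
    (hi : Integrable h (gaussianReal 0 1)) :
    ∫ x, maskG a x * h x ∂(gaussianReal 0 1) ≤
      (1 + a) / 2 * ∫ x, h x ∂(gaussianReal 0 1) := by
  have hI : ∀ s : ℝ → ℝ, Measurable s →
      Integrable (fun x => maskG a (s x) * h x) (gaussianReal 0 1) := by
    intro s hs
    refine Integrable.mono' (hi.const_mul a)
      ((((maskG_meas a).comp hs).mul hm).aestronglyMeasurable) ?_
    refine Filter.Eventually.of_forall fun x => ?_
    have h1 := maskG_one_le ha (s x)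
    have h2 := maskG_le ha (s x)
    rw [Real.norm_eq_abs, abs_of_nonneg (mul_nonneg (by linarith) (h0 x))]
    exact mul_le_mul_of_nonneg_right h2 (h0 x)
  have hneg : ∫ x, maskG a x * h x ∂(gaussianReal 0 1)
      = ∫ x, maskG a (-x) * h x ∂(gaussianReal 0 1) := by
    have hg : (gaussianReal 0 1).map (fun x : ℝ ↦ -x) = gaussianReal 0 1 := by
      rw [gaussianReal_map_neg]; simp
    conv_lhs => rw [← hg]
    have hmm : Measurable fun x => maskG a x * h x := (maskG_meas a).mul hm
    rw [integral_map measurable_neg.aemeasurable hmm.aestronglyMeasurable]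
    simp [he]
  have hsum : ∫ x, maskG a x * h x ∂(gaussianReal 0 1)
      + ∫ x, maskG a (-x) * h x ∂(gaussianReal 0 1)
      ≤ ∫ x, (1 + a) * h x ∂(gaussianReal 0 1) := by
    have hI1 : Integrable (fun x => maskG a x * h x) (gaussianReal 0 1) := hI _ measurable_id
    rw [← integral_add hI1 (hI _ measurable_neg)]
    refine integral_mono (hI1.add (hI _ measurable_neg))
      (hi.const_mul _) fun x => ?_
    have : maskG a x + maskG a (-x) ≤ 1 + a := by
      unfold maskG; split_ifs <;> linarith
    have := mul_le_mul_of_nonneg_right this (h0 x)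
    beta_reduce
    linarith
  rw [integral_const_mul] at hsum
  linarith

section
variable {Ω : Type} [MeasurableSpace Ω] {μ : Measure Ω} [IsProbabilityMeasure μ]
  {d : ℕ} {Y : Fin d → Ω → ℝ}

lemma gauss_sq_integral : ∫ x, x ^ 2 ∂(gaussianReal 0 1) = 1 := by
  have h := variance_of_integral_eq_zero (X := id) (μ := gaussianReal 0 1)
    measurable_id.aemeasurable (by simp)
  rw [variance_id_gaussianReal] at h
  simpa using h.symm

lemma gauss_memLp {Z : Ω → ℝ} (hm : Measurable Z)
    (hl : Measure.map Z μ = gaussianReal 0 1) : MemLp Z 2 μ := by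
  have h : MemLp id 2 (Measure.map Z μ) := by
    rw [hl]; exact memLp_id_gaussianReal' 2 (by simp)
  exact h.comp_of_map hm.aemeasurable

lemma gauss_mean {Z : Ω → ℝ} (hm : Measurable Z)
    (hl : Measure.map Z μ = gaussianReal 0 1) : ∫ ω, Z ω ∂μ = 0 := by
  have := integral_map (μ := μ) hm.aemeasurable (f := fun x : ℝ => x)
    measurable_id.aestronglyMeasurable
  rw [hl] at this
  simpa using this.symm

lemma gauss_sq {Z : Ω → ℝ} (hm : Measurable Z)
    (hl : Measure.map Z μ = gaussianReal 0 1) : ∫ ω, Z ω ^ 2 ∂μ = 1 := by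
  have := integral_map (μ := μ) hm.aemeasurable (f := fun x : ℝ => x ^ 2)
    (measurable_id.pow_const 2).aestronglyMeasurable
  rw [hl, gauss_sq_integral] at this
  exact this.symm

lemma sum_sq_integral (hm : ∀ e, Measurable (Y e)) (hi : iIndepFun Y μ)
    (hl : ∀ e, Measure.map (Y e) μ = gaussianReal 0 1) :
    ∫ ω, (∑ e, Y e ω) ^ 2 ∂μ = d := by
  have hL := fun e => gauss_memLp (hm e) (hl e)
  have h1 := IndepFun.variance_sum (X := Y) (s := Finset.univ) (fun i _ => hL i)
    (fun i _ j _ hij => hi.indepFun hij)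
  have hz : ∫ ω, (∑ e, Y e) ω ∂μ = 0 := by
    simp only [Finset.sum_apply]
    rw [integral_finsetSum _ (fun i _ => (hL i).integrable one_le_two)]
    exact Finset.sum_eq_zero fun i _ => gauss_mean (hm i) (hl i)
  rw [variance_of_integral_eq_zero (by fun_prop) hz] at h1
  simp only [Finset.sum_apply] at h1
  rw [h1]
  have : ∀ e, variance (Y e) μ = 1 := fun e => by
    rw [variance_of_integral_eq_zero (hm e).aemeasurable (gauss_mean (hm e) (hl e)),
      gauss_sq (hm e) (hl e)]
  simp [this]

lemma prod_maskG_integrable {a : ℝ} (ha : 1 ≤ a) (hm : ∀ e, Measurable (Y e))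
    (hl : ∀ e, Measure.map (Y e) μ = gaussianReal 0 1) (i : Fin d) :
    Integrable (fun ω => (∏ e, maskG a (Y e ω)) * Y i ω ^ 2) μ := by
  have hms : Measurable fun ω => ∏ e, maskG a (Y e ω) :=
    Finset.measurable_fun_prod _ fun e _ => (maskG_meas a).comp (hm e)
  refine Integrable.mono' ((gauss_memLp (hm i) (hl i)).integrable_sq.const_mul (a ^ d))
    (hms.mul ((hm i).pow_const 2)).aestronglyMeasurable ?_
  refine Filter.Eventually.of_forall fun ω => ?_
  have h0 : 0 ≤ ∏ e, maskG a (Y e ω) :=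
    Finset.prod_nonneg fun e _ => by linarith [maskG_one_le ha (Y e ω)]
  have h1 : ∏ e, maskG a (Y e ω) ≤ a ^ d := by
    have := Finset.prod_le_prod (s := Finset.univ) (f := fun e => maskG a (Y e ω))
      (g := fun _ => a) (fun e _ => by linarith [maskG_one_le ha (Y e ω)])
      (fun e _ => maskG_le ha _)
    simpa using this
  rw [Real.norm_eq_abs, abs_of_nonneg (mul_nonneg h0 (sq_nonneg _))]
  exact mul_le_mul_of_nonneg_right h1 (sq_nonneg _)

lemma prod_maskG_le {a : ℝ} (ha : 1 ≤ a) (hm : ∀ e, Measurable (Y e)) (hi : iIndepFun Y μ)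
    (hl : ∀ e, Measure.map (Y e) μ = gaussianReal 0 1) (i : Fin d) :
    ∫ ω, (∏ e, maskG a (Y e ω)) * Y i ω ^ 2 ∂μ ≤ ((1 + a) / 2) ^ d := by
  let H : Fin d → ℝ → ℝ := fun e x => if e = i then x ^ 2 else 1
  have hH : ∀ e, Measurable (H e) := fun e => by
    by_cases h : e = i
    · simp only [H, h, if_true]; fun_prop
    · simp only [H, h, if_false]; fun_prop
  have hHm : ∀ e, Measurable fun x => maskG a x * H e x := fun e => (maskG_meas a).mul (hH e)
  have h1 : ∀ ω, (∏ e, maskG a (Y e ω)) * Y i ω ^ 2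
      = ∏ e, (fun x => maskG a x * H e x) (Y e ω) := by
    intro ω
    simp only [Finset.prod_mul_distrib, H]
    simp
  simp_rw [h1]
  rw [hi.integral_fun_prod_comp (f := fun e x => maskG a x * H e x)
    (fun e => (hm e).aemeasurable) (fun e => (hHm e).aestronglyMeasurable)]
  have h2 : ∀ e, ∫ ω, maskG a (Y e ω) * H e (Y e ω) ∂μ ≤ (1 + a) / 2 := by
    intro e
    have h3 := integral_map (μ := μ) (hm e).aemeasurable (hHm e).aestronglyMeasurable
    rw [← h3, hl e]
    have hint : Integrable (H e) (gaussianReal 0 1) ∧ ∫ x, H e x ∂(gaussianReal 0 1) = 1 := by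
      by_cases h : e = i
      · simp only [H, h, if_true]
        exact ⟨(memLp_id_gaussianReal' 2 (by simp)).integrable_sq, gauss_sq_integral⟩
      · simp [H, h]
    have := maskG_half ha (H e) (hH e) (fun x => by simp only [H]; split_ifs <;> positivity)
      (fun x => by simp [H]) hint.1
    rw [hint.2] at this
    linarith
  calc _ ≤ ∏ _e : Fin d, ((1 + a) / 2) := by
        refine Finset.prod_le_prod (fun e _ => integral_nonneg fun ω => ?_) fun e _ => h2 e
        refine mul_nonneg (by linarith [maskG_one_le ha (Y e ω)]) ?_
        simp only [H]; split_ifs <;> positivity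
    _ = _ := by rw [Finset.prod_const, Finset.card_univ, Fintype.card_fin]

lemma prod_maskG_eq (a : ℝ) (y : Fin d → ℝ) :
    ∏ e, maskG a (y e) = a ^ (Finset.univ.filter fun e => 0 < y e).card := by
  simp [maskG, Finset.prod_ite]

lemma mask_coord {a : ℝ} (ha : 1 ≤ a) (hd : 0 < d) (t : ℕ) (hm : ∀ e, Measurable (Y e))
    (hi : iIndepFun Y μ) (hl : ∀ e, Measure.map (Y e) μ = gaussianReal 0 1) :
    Integrable (fun ω => if t ≤ (Finset.univ.filter fun e => 0 < Y e ω).card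
        ∨ t ≤ (Finset.univ.filter fun e => Y e ω < 0).card
      then ((1 / (d : ℝ)) * ∑ e : Fin d, Y e ω) ^ 2 else 0) μ ∧
    ∫ ω, (if t ≤ (Finset.univ.filter fun e => 0 < Y e ω).card
        ∨ t ≤ (Finset.univ.filter fun e => Y e ω < 0).card
      then ((1 / (d : ℝ)) * ∑ e : Fin d, Y e ω) ^ 2 else 0) ∂μ
      ≤ 2 * (((1 + a) / 2) ^ d / a ^ t) := by
  have hd' : (0 : ℝ) < d := by exact_mod_cast hd
  let Z : Fin d → Ω → ℝ := fun e ω => - Y e ω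
  have hmZ : ∀ e, Measurable (Z e) := fun e => (hm e).neg
  have hiZ : iIndepFun Z μ := hi.comp (fun _ x => -x) (fun _ => measurable_neg)
  have hlZ : ∀ e, Measure.map (Z e) μ = gaussianReal 0 1 := fun e => by
    have : Z e = (fun x : ℝ => -x) ∘ Y e := rfl
    rw [this, ← Measure.map_map measurable_neg (hm e), hl e, gaussianReal_map_neg]; simp
  have hL : MemLp (fun ω => (1 / (d : ℝ)) * ∑ e : Fin d, Y e ω) 2 μ :=
    (memLp_finsetSum _ fun e _ => gauss_memLp (hm e) (hl e)).const_mul _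
  have hcard : ∀ W : Fin d → Ω → ℝ, (∀ e, Measurable (W e)) →
      Measurable fun ω => (Finset.univ.filter fun e => 0 < W e ω).card := by
    intro W hW
    simp only [Finset.card_filter]
    refine Finset.measurable_fun_sum _ fun e _ => ?_
    exact Measurable.ite (measurableSet_lt measurable_const (hW e)) measurable_const
      measurable_const
  have hset : MeasurableSet {ω | t ≤ (Finset.univ.filter fun e => 0 < Y e ω).card
        ∨ t ≤ (Finset.univ.filter fun e => Y e ω < 0).card} := by
    have h1 := hcard Y hm
    have h2 := hcard Z hmZ
    simp only [Z, Left.neg_pos_iff] at h2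
    exact (measurableSet_le measurable_const h1).union (measurableSet_le measurable_const h2)
  have hint : Integrable (fun ω => if t ≤ (Finset.univ.filter fun e => 0 < Y e ω).card
        ∨ t ≤ (Finset.univ.filter fun e => Y e ω < 0).card
      then ((1 / (d : ℝ)) * ∑ e : Fin d, Y e ω) ^ 2 else 0) μ := by
    have := hL.integrable_sq.indicator hset
    refine this.congr (Filter.Eventually.of_forall fun ω => ?_)
    simp only [Set.indicator_apply, Set.mem_setOf_eq]
  refine ⟨hint, ?_⟩
  have hat : 0 < a ^ t := by positivity
  let B : Ω → ℝ := fun ω => (1 / (d * a ^ t)) *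
    ∑ i : Fin d, ((∏ e, maskG a (Y e ω)) * Y i ω ^ 2 + (∏ e, maskG a (Z e ω)) * Z i ω ^ 2)
  have hBi : ∀ i ∈ Finset.univ, Integrable (fun ω => (∏ e, maskG a (Y e ω)) * Y i ω ^ 2
      + (∏ e, maskG a (Z e ω)) * Z i ω ^ 2) μ := fun i _ =>
    (prod_maskG_integrable ha hm hl i).add (prod_maskG_integrable ha hmZ hlZ i)
  have hB : Integrable B μ := (integrable_finsetSum _ hBi).const_mul _
  calc _ ≤ ∫ ω, B ω ∂μ := by
        refine integral_mono hint hB fun ω => ?_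
        have hBe : B ω = (1 / (d * a ^ t)) *
            (((∏ e, maskG a (Y e ω)) + (∏ e, maskG a (Z e ω))) * ∑ i, Y i ω ^ 2) := by
          simp only [B, Z, Finset.mul_sum, neg_sq, add_mul]
        have hp1 := prod_maskG_eq a (fun e => Y e ω)
        have hp2 := prod_maskG_eq a (fun e => Z e ω)
        simp only [Z, Left.neg_pos_iff] at hp2
        have hS : 0 ≤ ∑ i, Y i ω ^ 2 := Finset.sum_nonneg fun i _ => sq_nonneg _
        have ha0 : 0 < a := by linarith
        simp only [Z] at hBe
        rw [hp1, hp2] at hBe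
        beta_reduce
        rw [hBe]
        split_ifs with hc
        · have hge : a ^ t ≤ a ^ (Finset.univ.filter fun e => 0 < Y e ω).card +
              a ^ (Finset.univ.filter fun e => Y e ω < 0).card := by
            have p1 : 0 < a ^ (Finset.univ.filter fun e => 0 < Y e ω).card := by positivity
            have p2 : 0 < a ^ (Finset.univ.filter fun e => Y e ω < 0).card := by positivity
            rcases hc with hc | hc
            · have := pow_le_pow_right₀ ha hc; linarith
            · have := pow_le_pow_right₀ ha hc; linarith
          have hcs := sq_sum_le_card_mul_sum_sq (s := Finset.univ) (f := fun e => Y e ω)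
          simp only [Finset.card_univ, Fintype.card_fin] at hcs
          calc ((1 / (d : ℝ)) * ∑ e : Fin d, Y e ω) ^ 2
              = (1 / d) ^ 2 * (∑ e : Fin d, Y e ω) ^ 2 := by ring
            _ ≤ (1 / d) ^ 2 * (d * ∑ e : Fin d, Y e ω ^ 2) := by gcongr
            _ = (1 / (d * a ^ t)) * (a ^ t * ∑ e : Fin d, Y e ω ^ 2) := by field_simp
            _ ≤ _ := by gcongr
        · positivity
    _ = (1 / (d * a ^ t)) * ∑ i : Fin d, (∫ ω, (∏ e, maskG a (Y e ω)) * Y i ω ^ 2 ∂μ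
          + ∫ ω, (∏ e, maskG a (Z e ω)) * Z i ω ^ 2 ∂μ) := by
        simp only [B]
        rw [integral_const_mul, integral_finsetSum _ hBi]
        congr 1
        exact Finset.sum_congr rfl fun i _ => integral_add
          (prod_maskG_integrable ha hm hl i) (prod_maskG_integrable ha hmZ hlZ i)
    _ ≤ (1 / (d * a ^ t)) * ∑ _i : Fin d, (((1 + a) / 2) ^ d + ((1 + a) / 2) ^ d) := by
        gcongr with i
        · exact prod_maskG_le ha hm hi hl i
        · exact prod_maskG_le ha hmZ hiZ hlZ i
    _ = _ := by
        simp only [Finset.sum_const, Finset.card_univ, Fintype.card_fin, nsmul_eq_mul]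
        field_simp
        ring

end

lemma chernoff_base {r : ℝ} (hr1 : 1 / 2 < r) (d t : ℕ) (ht : r * d ≤ t) :
    ((1 + Real.exp (4 * (r - 1 / 2))) / 2) ^ d / Real.exp (4 * (r - 1 / 2)) ^ t
      ≤ Real.exp (-(2 * (r - 1 / 2) ^ 2) * d) := by
  set δ := r - 1 / 2 with hδ
  have hδ0 : 0 < δ := by linarith
  have h1 : (1 + Real.exp (4 * δ)) / 2 ≤ Real.exp (2 * δ + 2 * δ ^ 2) := by
    have h := Real.cosh_le_exp_half_sq (2 * δ)
    have h2 : (1 + Real.exp (4 * δ)) / 2 = Real.exp (2 * δ) * Real.cosh (2 * δ) := by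
      rw [Real.cosh_eq, mul_div_assoc', mul_add, ← Real.exp_add, ← Real.exp_add]
      ring_nf
      simp
      ring
    rw [h2, Real.exp_add]
    have : (2 * δ) ^ 2 / 2 = 2 * δ ^ 2 := by ring
    rw [this] at h
    gcongr
  rw [div_le_iff₀ (by positivity)]
  calc _ ≤ Real.exp (2 * δ + 2 * δ ^ 2) ^ d := by gcongr
    _ = Real.exp ((2 * δ + 2 * δ ^ 2) * d) := by rw [← Real.exp_nat_mul]; ring_nf
    _ ≤ Real.exp (-(2 * δ ^ 2) * d + 4 * δ * t) := by
        apply Real.exp_le_exp.mpr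
        have : r = δ + 1 / 2 := by linarith
        rw [this] at ht
        have := mul_le_mul_of_nonneg_left ht (by linarith : (0 : ℝ) ≤ 4 * δ)
        nlinarith
    _ = _ := by rw [Real.exp_add, ← Real.exp_nat_mul]; ring_nf

/-- for every fixed ratio `r ∈ (1/2, 1]` there are constants
`c ∈ (1, 2]` and `K > 0` such that for all `d`, with threshold `t = ⌈r d⌉`, one has
`(d − t) C(d,t) (1/2)^{d−1} ≤ K / c^d`; consequently, for independent standard
Gaussian gradient vectors in `ℝⁿ`, the expected squared norm of the AND-masked
average gradient is `O(n / c^d)` (exponential decay), whereas the expected squared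
norm of the plain average gradient equals `n/d` (linear decay). -/
theorem and_mask_exponential_decay_of_random_gradients
    (r : ℝ) (hr1 : 1 / 2 < r) (hr2 : r ≤ 1) :
    ∃ c K : ℝ, 1 < c ∧ c ≤ 2 ∧ 0 < K ∧
      ∀ d : ℕ, 0 < d →
        (((d : ℝ) - (⌈r * d⌉₊ : ℝ)) * (d.choose ⌈r * d⌉₊ : ℝ) * (1 / 2 : ℝ) ^ (d - 1)
            ≤ K / c ^ d) ∧
        ∀ (n : ℕ) (Ω : Type) [MeasurableSpace Ω] (μ : Measure Ω),
          IsProbabilityMeasure μ →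
          ∀ (X : Fin d → Fin n → Ω → ℝ),
            (∀ e j, Measurable (X e j)) →
            iIndepFun
              (fun p : Fin d × Fin n => X p.1 p.2) μ →
            (∀ e j, Measure.map (X e j) μ = gaussianReal 0 1) →
            (∫ ω, ∑ j : Fin n,
                (if ⌈r * d⌉₊ ≤ (Finset.univ.filter fun e => 0 < X e j ω).card
                    ∨ ⌈r * d⌉₊ ≤ (Finset.univ.filter fun e => X e j ω < 0).card
                  then ((1 / (d : ℝ)) * ∑ e : Fin d, X e j ω) ^ 2 else 0) ∂μ
                ≤ K * (n : ℝ) / c ^ d)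
            ∧ ∫ ω, ∑ j : Fin n, ((1 / (d : ℝ)) * ∑ e : Fin d, X e j ω) ^ 2 ∂μ
                = (n : ℝ) / d := by
  set δ := r - 1 / 2 with hδ
  have hδ0 : 0 < δ := by linarith
  have hδ1 : δ ≤ 1 / 2 := by linarith
  have hsq : 0 < δ ^ 2 := by positivity
  have hK : 2 ≤ 2 / δ ^ 2 := by
    rw [le_div_iff₀ hsq]; nlinarith
  refine ⟨Real.exp (δ ^ 2), 2 / δ ^ 2, Real.one_lt_exp_iff.mpr hsq, ?_, by positivity, ?_⟩
  · have h1 : δ ^ 2 ≤ Real.log 2 := by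
      have := Real.log_two_gt_d9
      nlinarith
    calc Real.exp (δ ^ 2) ≤ Real.exp (Real.log 2) := Real.exp_le_exp.mpr h1
      _ = 2 := Real.exp_log (by norm_num)
  intro d hd
  have hd' : (0 : ℝ) < d := by exact_mod_cast hd
  set t := ⌈r * d⌉₊ with ht
  have htr : r * d ≤ t := Nat.le_ceil _
  have hch := chernoff_base hr1 d t htr
  rw [← hδ] at hch
  set a := Real.exp (4 * δ) with ha
  have ha1 : 1 ≤ a := Real.one_le_exp (by positivity)
  have ha0 : 0 < a := by linarith
  have hsplit : Real.exp (-(2 * δ ^ 2) * d) = Real.exp (-(δ ^ 2 * d)) * Real.exp (-(δ ^ 2 * d)) := by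
    rw [← Real.exp_add]; ring_nf
  have hcd : ∀ x : ℝ, x / Real.exp (δ ^ 2) ^ d = x * Real.exp (-(δ ^ 2 * d)) := by
    intro x
    rw [← Real.exp_nat_mul, Real.exp_neg, div_eq_mul_inv, mul_comm (d : ℝ)]
  have hE0 : 0 < Real.exp (-(δ ^ 2 * d)) := Real.exp_pos _
  refine ⟨?_, ?_⟩
  · have hbin : (d.choose t : ℝ) * a ^ t ≤ (1 + a) ^ d := by
      by_cases htd : t ≤ d
      · rw [add_comm, add_pow]
        have := Finset.single_le_sum (s := Finset.range (d + 1))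
          (f := fun m => a ^ m * 1 ^ (d - m) * (d.choose m : ℝ))
          (fun m _ => by positivity) (Finset.mem_range.mpr (Nat.lt_succ_of_le htd))
        simp only [one_pow, mul_one] at this ⊢
        linarith
      · rw [Nat.choose_eq_zero_of_lt (by omega)]
        simp only [Nat.cast_zero, zero_mul]
        positivity
    have hC : (d.choose t : ℝ) * (1 / 2) ^ d ≤ Real.exp (-(2 * δ ^ 2) * d) := by
      refine le_trans ?_ hch
      rw [le_div_iff₀ (by positivity), div_pow, div_pow, one_pow]
      have : (d.choose t : ℝ) * (1 / 2 ^ d) * a ^ t = (d.choose t : ℝ) * a ^ t / 2 ^ d := by ring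
      rw [this]
      gcongr
    have hhalf : (1 / 2 : ℝ) ^ (d - 1) = 2 * (1 / 2) ^ d := by
      obtain ⟨k, rfl⟩ := Nat.exists_eq_succ_of_ne_zero hd.ne'
      simp only [Nat.succ_eq_add_one, Nat.add_sub_cancel, pow_succ]
      ring
    have hdE : (d : ℝ) * Real.exp (-(δ ^ 2 * d)) ≤ 1 / δ ^ 2 := by
      rw [Real.exp_neg, le_div_iff₀ hsq, ← div_eq_mul_inv, div_mul_eq_mul_div,
        div_le_one (Real.exp_pos _)]
      have := Real.add_one_le_exp (δ ^ 2 * d)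
      linarith
    rw [hcd, hhalf]
    calc ((d : ℝ) - t) * (d.choose t : ℝ) * (2 * (1 / 2) ^ d)
        = 2 * ((d : ℝ) - t) * ((d.choose t : ℝ) * (1 / 2) ^ d) := by ring
      _ ≤ 2 * (d : ℝ) * ((d.choose t : ℝ) * (1 / 2) ^ d) := by
          gcongr
          have : (0 : ℝ) ≤ t := Nat.cast_nonneg _
          linarith
      _ ≤ 2 * (d : ℝ) * Real.exp (-(2 * δ ^ 2) * d) := by gcongr
      _ = 2 * ((d : ℝ) * Real.exp (-(δ ^ 2 * d))) * Real.exp (-(δ ^ 2 * d)) := by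
          rw [hsplit]; ring
      _ ≤ 2 * (1 / δ ^ 2) * Real.exp (-(δ ^ 2 * d)) := by gcongr
      _ = _ := by ring
  intro n Ω _ μ hμ X hm hi hl
  have hij : ∀ j, iIndepFun (fun e => X e j) μ := fun j =>
    hi.precomp (g := fun e : Fin d => (e, j)) (fun x y h => (Prod.mk.inj h).1)
  refine ⟨?_, ?_⟩
  · have hc := fun j => mask_coord ha1 hd t (fun e => hm e j) (hij j) (fun e => hl e j)
    rw [integral_finsetSum _ fun j _ => (hc j).1, hcd]
    have hb : 2 * (((1 + a) / 2) ^ d / a ^ t) ≤ 2 / δ ^ 2 * Real.exp (-(δ ^ 2 * d)) := by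
      have hle : Real.exp (-(δ ^ 2 * d)) ≤ 1 := Real.exp_le_one_iff.mpr (by
        have : 0 < δ ^ 2 * d := by positivity
        linarith)
      rw [hsplit] at hch
      have h1 : Real.exp (-(δ ^ 2 * d)) * Real.exp (-(δ ^ 2 * d)) ≤ Real.exp (-(δ ^ 2 * d)) :=
        mul_le_of_le_one_left hE0.le hle
      have h2 := mul_le_mul_of_nonneg_right hK hE0.le
      linarith
    calc _ ≤ ∑ _j : Fin n, 2 / δ ^ 2 * Real.exp (-(δ ^ 2 * d)) :=
          Finset.sum_le_sum fun j _ => (hc j).2.trans hb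
      _ = _ := by
          simp only [Finset.sum_const, Finset.card_univ, Fintype.card_fin, nsmul_eq_mul]
          ring
  · have hL : ∀ j, MemLp (fun ω => (1 / (d : ℝ)) * ∑ e : Fin d, X e j ω) 2 μ := fun j =>
      (memLp_finsetSum _ fun e _ => gauss_memLp (hm e j) (hl e j)).const_mul _
    rw [integral_finsetSum _ fun j _ => (hL j).integrable_sq]
    have : ∀ j, ∫ ω, ((1 / (d : ℝ)) * ∑ e : Fin d, X e j ω) ^ 2 ∂μ = 1 / (d : ℝ) := by
      intro j
      simp_rw [mul_pow]
      rw [integral_const_mul, sum_sq_integral (fun e => hm e j) (hij j) (fun e => hl e j)]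
      field_simp
    simp only [this, Finset.sum_const, Finset.card_univ, Fintype.card_fin, nsmul_eq_mul]
    ring
end

section
/- Let a_1, …, a_n and b_1, …, b_n be strictly positive reals, define L_A(θ) = (1/2) Σ_i a_i θ_i² and L_B(θ) = (1/2) Σ_i b_i θ_i², and for ε > 0 define the inconsistency score I^ε(0) = max{ sup{L_B(θ) : L_A(θ) ≤ ε}, sup{L_A(θ) : L_B(θ) ≤ ε} }. Then I^ε(0) = ε · max_{1 ≤ i ≤ n} max{ b_i / a_i, a_i / b_i }. -/
theorem aux_sSup (n : ℕ) (hn : 0 < n) (a b : Fin n → ℝ)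
    (ha : ∀ i, 0 < a i) (hb : ∀ i, 0 < b i) (ε : ℝ) (hε : 0 < ε) :
    sSup {v : ℝ | ∃ θ : Fin n → ℝ,
        (1 / 2) * ∑ i, a i * θ i ^ 2 ≤ ε ∧ v = (1 / 2) * ∑ i, b i * θ i ^ 2}
      = ε * ⨆ i, b i / a i := by
  haveI : Nonempty (Fin n) := ⟨⟨0, hn⟩⟩
  have hbd : BddAbove (Set.range fun i => b i / a i) := Set.finite_range _ |>.bddAbove
  obtain ⟨j, hj⟩ := exists_eq_ciSup_of_finite (f := fun i => b i / a i)
  have hle : ∀ i, b i / a i ≤ b j / a j := fun i => by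
    have := le_ciSup hbd i
    rw [← hj] at this
    exact this
  rw [← hj]
  apply IsGreatest.csSup_eq
  have hs : Real.sqrt (2 * ε / a j) ^ 2 = 2 * ε / a j :=
    Real.sq_sqrt (div_nonneg (by linarith) (ha j).le)
  have key : ∀ c : Fin n → ℝ,
      ∑ i, c i * (if i = j then Real.sqrt (2 * ε / a j) else 0) ^ 2 = c j * (2 * ε / a j) := by
    intro c
    rw [Finset.sum_eq_single j]
    · rw [if_pos rfl, hs]
    · intro i _ hi
      simp [hi]
    · simp
  have haj := (ha j).ne'
  constructor
  · refine ⟨fun i => if i = j then Real.sqrt (2 * ε / a j) else 0, ?_, ?_⟩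
    · rw [key]
      apply le_of_eq
      field_simp
    · rw [key]
      field_simp
  · rintro v ⟨θ, h, rfl⟩
    have h1 : ∑ i, b i * θ i ^ 2 ≤ (b j / a j) * ∑ i, a i * θ i ^ 2 := by
      rw [Finset.mul_sum]
      apply Finset.sum_le_sum
      intro i _
      rw [← mul_assoc]
      apply mul_le_mul_of_nonneg_right _ (sq_nonneg _)
      exact (div_le_iff₀ (ha i)).1 (hle i)
    have h2 : 0 ≤ b j / a j := (div_pos (hb j) (ha j)).le
    have h3 := mul_le_mul_of_nonneg_left h h2
    show _ ≤ ε * (b j / a j)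
    linarith

/-- for two diagonal quadratic losses `L_A(θ) = (1/2) Σ a_i θ_i²` and
`L_B(θ) = (1/2) Σ b_i θ_i²` with strictly positive coefficients, the inconsistency
score `I^ε(0) = max{sup{L_B : L_A ≤ ε}, sup{L_A : L_B ≤ ε}}` equals
`ε · max_i max{b_i/a_i, a_i/b_i}`. -/
theorem inconsistency_score_diagonal_quadratics
    (n : ℕ) (hn : 0 < n) (a b : Fin n → ℝ)
    (ha : ∀ i, 0 < a i) (hb : ∀ i, 0 < b i)
    (ε : ℝ) (hε : 0 < ε) :
    max
      (sSup {v : ℝ | ∃ θ : Fin n → ℝ,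
        (1 / 2) * ∑ i, a i * θ i ^ 2 ≤ ε ∧ v = (1 / 2) * ∑ i, b i * θ i ^ 2})
      (sSup {v : ℝ | ∃ θ : Fin n → ℝ,
        (1 / 2) * ∑ i, b i * θ i ^ 2 ≤ ε ∧ v = (1 / 2) * ∑ i, a i * θ i ^ 2})
      = ε * ⨆ i, max (b i / a i) (a i / b i) := by
  rw [aux_sSup n hn a b ha hb ε hε, aux_sSup n hn b a hb ha ε hε, ← mul_max_of_nonneg _ _ hε.le]
  congr 1
  haveI : Nonempty (Fin n) := ⟨⟨0, hn⟩⟩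
  have hbd : ∀ f : Fin n → ℝ, BddAbove (Set.range f) := fun f => (Set.finite_range f).bddAbove
  apply le_antisymm
  · exact max_le (ciSup_mono (hbd _) fun i => le_max_left _ _)
      (ciSup_mono (hbd _) fun i => le_max_right _ _)
  · exact ciSup_le fun i => max_le_max (le_ciSup (f := fun i => b i / a i) (hbd _) i)
      (le_ciSup (f := fun i => a i / b i) (hbd _) i)
end
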